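/- Let G and H be abelian groups, T ⊂ G a tile, and ρ : G → H a surjective homomorphism that is injective on T. If G^k × H^ℓ is (T^{×k}, ρ(T)^{×ℓ})-tilable, then G^{k+ℓ} can be partitioned into copies of T, where a copy of T is a translate of T placed in one of the k+ℓ coordinate directions. -/

import Mathlib

universe u

def IsCopyD {ι : Type*} [DecidableEq ι] {G : ι → Type*}
    [∀ i, AddCommGroup (G i)] (T : ∀ i, Set (G i))
    (S : Set (∀ i, G i)) : Prop :=
  ∃ (j : ι) (y : ∀ i, G i),
    S = {z | ∃ t ∈ T j, z = Function.update y j (y j + t)}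

def TilableD {ι : Type*} [DecidableEq ι] {G : ι → Type*}
    [∀ i, AddCommGroup (G i)] (T : ∀ i, Set (G i))
    (X : Set (∀ i, G i)) : Prop :=
  ∃ P : Set (Set (∀ i, G i)),
    (∀ S ∈ P, IsCopyD T S) ∧ P.PairwiseDisjoint id ∧ ⋃₀ P = X

instance sumElimAddCommGroup {α β : Type*} (F : α → Type u) (G : β → Type u)
    [∀ a, AddCommGroup (F a)] [∀ b, AddCommGroup (G b)] :
    ∀ i : α ⊕ β, AddCommGroup (Sum.elim F G i) := fun i =>
  match i with
  | .inl a => inferInstanceAs (AddCommGroup (F a))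
  | .inr b => inferInstanceAs (AddCommGroup (G b))

theorem lifting_aux {ι κ : Type*} [DecidableEq ι] [DecidableEq κ] {G : Type*} [AddCommGroup G]
    {B : ι → Type*} [∀ i, AddCommGroup (B i)] (e : ι ≃ κ) (ρ : ∀ i, G →+ B i) (T : Set G)
    (hinj : ∀ i, Set.InjOn (ρ i) T)
    (h : TilableD (G := B) (fun i => ρ i '' T) Set.univ) :
    TilableD (G := fun _ : κ => G) (fun _ => T) Set.univ := by
  obtain ⟨P, hP, hdisj, hcov⟩ := h
  have hne : Nonempty ι := by
    have h0 : (0 : ∀ i, B i) ∈ ⋃₀ P := by rw [hcov]; trivial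
    obtain ⟨S, hSP, -⟩ := h0
    exact ⟨(hP S hSP).choose⟩
  choose! j y hS using hP
  let φ : (κ → G) → ∀ i, B i := fun z i => ρ i (z (e i))
  have hφ : ∀ (z : κ → G) (i : ι) (t : G), φ (Function.update z (e i) (z (e i) + t))
      = Function.update (φ z) i (φ z i + ρ i t) := by
    intro z i t
    funext i'
    by_cases hi : i' = i
    · subst hi; simp [φ]
    · simp [φ, hi]
  have hmem : ∀ S ∈ P, ∀ (z : κ → G), φ z = y S → ∀ t ∈ T,
      φ (Function.update z (e (j S)) (z (e (j S)) + t)) ∈ S := by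
    intro S hSP z hz t ht
    rw [hφ, hz]
    exact (Set.ext_iff.mp (hS S hSP) _).mpr ⟨_, ⟨t, ht, rfl⟩, rfl⟩
  refine ⟨{C | ∃ S ∈ P, ∃ z : κ → G, φ z = y S ∧
    C = {w | ∃ t ∈ T, w = Function.update z (e (j S)) (z (e (j S)) + t)}}, ?_, ?_, ?_⟩
  · rintro C ⟨S, -, z, -, rfl⟩
    exact ⟨e (j S), z, rfl⟩
  · rintro C ⟨S, hSP, z, hz, rfl⟩ C' ⟨S', hSP', z', hz', rfl⟩ hne
    refine Set.disjoint_left.mpr ?_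
    rintro w ⟨t, ht, hw⟩ ⟨t', ht', hw'⟩
    apply hne
    have h1 : φ w ∈ S := hw ▸ hmem S hSP z hz t ht
    have h2 : φ w ∈ S' := hw' ▸ hmem S' hSP' z' hz' t' ht'
    have hSS : S = S' := by
      by_contra hn
      exact Set.disjoint_left.mp (hdisj hSP hSP' hn) h1 h2
    subst hSS
    have h3 := hφ z (j S) t
    have h4 := hφ z' (j S) t'
    rw [← hw, hz] at h3
    rw [← hw', hz', h3] at h4
    have h5 := congrFun h4 (j S)
    simp only [Function.update_self, add_right_inj] at h5
    have htt : t = t' := hinj _ ht ht' h5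
    subst htt
    have hzz : z = z' := by
      funext i
      have h6 := congrFun (hw.symm.trans hw') i
      by_cases hi : i = e (j S)
      · subst hi; simpa using h6
      · simpa [hi] using h6
    rw [hzz]
  · refine Set.eq_univ_of_forall fun w => ?_
    have hw : φ w ∈ ⋃₀ P := by rw [hcov]; trivial
    obtain ⟨S, hSP, hwS⟩ := hw
    have hwS' := hwS
    rw [hS S hSP] at hwS'
    obtain ⟨_, ⟨t, ht, rfl⟩, hwt⟩ := hwS'
    refine ⟨_, ⟨S, hSP, Function.update w (e (j S)) (w (e (j S)) + -t), ?_, rfl⟩, t, ht, ?_⟩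
    · rw [hφ, hwt]
      simp
    · simp

/-- if `ρ : G → H` is a surjective homomorphism injective on `T`
and `G^k × H^ℓ` is `(T^{×k}, ρ(T)^{×ℓ})`-tilable, then `G^{k+ℓ}` partitions
into copies of `T` placed in the coordinate directions. -/
theorem completeLifting {G H : Type u} [AddCommGroup G] [AddCommGroup H]
    (T : Set G) (ρ : G →+ H) (hsurj : Function.Surjective ρ)
    (hinj : Set.InjOn ρ T) (k ℓ : ℕ)
    (h : TilableD (G := Sum.elim (fun _ : Fin k => G) fun _ : Fin ℓ => H)
          (fun i => match i with
            | .inl _ => T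
            | .inr _ => ρ '' T)
          Set.univ) :
    TilableD (G := fun _ : Fin (k + ℓ) => G) (fun _ => T) Set.univ := by
  let r : ∀ i : Fin k ⊕ Fin ℓ, G →+ Sum.elim (fun _ : Fin k => G) (fun _ : Fin ℓ => H) i :=
    fun i => match i with
      | .inl _ => AddMonoidHom.id G
      | .inr _ => ρ
  refine lifting_aux finSumFinEquiv r T ?_ ?_
  · rintro (i | i)
    · exact Function.injective_id.injOn
    · exact hinj
  · convert h using 1
    funext i
    rcases i with i | i
    · exact Set.image_id T
    · rfl
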